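/- arXiv:1809.05460 — 3 statements merged into one kernel-verified Lean document; each statement's English description precedes it below -/
import Mathlib

section
/- Let G ⊆ UT(n,ℝ) be a real unipotent group, Γ a lattice in G, and H a real algebraic subgroup of G that is normal in G. Suppose H₀ is a real algebraic subgroup of G such that H ⊆ H₀, H₀ is Γ-rational, and H₀ ⊆ L for every Γ-rational real algebraic subgroup L of G with H ⊆ L (i.e. H₀ is the smallest Γ-rational real algebraic subgroup of G containing H). Then H₀ is normal in G. -/
open Pointwise Filter

noncomputable section

/-- Square matrices of size `n` over `R`. -/
abbrev Mat (n : ℕ) (R : Type) : Type := Matrix (Fin n) (Fin n) R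

/-- The set `UT(n,ℝ)` of upper triangular matrices with `1`s on the diagonal. -/
def UTset (n : ℕ) : Set (Mat n ℝ) :=
  {A | (∀ i, A i i = 1) ∧ ∀ i j : Fin n, (j : ℕ) < (i : ℕ) → A i j = 0}

/-- The entries of a matrix, as a point of `ℝ^(n²)`. -/
def matEval {n : ℕ} (A : Mat n ℝ) : Fin n × Fin n → ℝ := fun ij => A ij.1 ij.2

/-- A real unipotent group: a subgroup of `UT(n,ℝ)` which is the common zero set in
`UT(n,ℝ)` of a family of real polynomials in the matrix entries. -/
def IsRealUnipotentGroup (n : ℕ) (G : Set (Mat n ℝ)) : Prop :=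
  (∃ S : Set (MvPolynomial (Fin n × Fin n) ℝ),
      G = {A | A ∈ UTset n ∧ ∀ p ∈ S, MvPolynomial.eval (matEval A) p = 0}) ∧
    (1 : Mat n ℝ) ∈ G ∧ (∀ a ∈ G, ∀ b ∈ G, a * b ∈ G) ∧ ∀ a ∈ G, a⁻¹ ∈ G

/-- A real algebraic subgroup of a real unipotent group `G`. -/
def IsRealAlgSubgroup (n : ℕ) (G H : Set (Mat n ℝ)) : Prop :=
  H ⊆ G ∧ IsRealUnipotentGroup n H

/-- `N` is a normal subgroup-set of `G`. -/
def IsNormalIn (n : ℕ) (G N : Set (Mat n ℝ)) : Prop :=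
  ∀ g ∈ G, ∀ x ∈ N, g * x * g⁻¹ ∈ N

/-- `Γ` is a lattice in `G`: a discrete subgroup which is cocompact, i.e. there is a
compact `K ⊆ G` with `K·Γ = G` (equivalently, `G/Γ` is compact). -/
def IsLatticeIn (n : ℕ) (G Γ : Set (Mat n ℝ)) : Prop :=
  Γ ⊆ G ∧ (1 : Mat n ℝ) ∈ Γ ∧ (∀ a ∈ Γ, ∀ b ∈ Γ, a * b ∈ Γ) ∧ (∀ a ∈ Γ, a⁻¹ ∈ Γ) ∧
    DiscreteTopology ↥Γ ∧
    ∃ K : Set (Mat n ℝ), K ⊆ G ∧ IsCompact K ∧ ∀ g ∈ G, ∃ k ∈ K, ∃ γ ∈ Γ, g = k * γ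

/-- `H` is `Γ`-rational: `Γ ∩ H` is a lattice in `H`. -/
def IsRationalFor (n : ℕ) (Γ H : Set (Mat n ℝ)) : Prop :=
  IsLatticeIn n H (Γ ∩ H)

/-- The hyperreal matrix represented by a sequence of real matrices. -/
def matOfSeq (n : ℕ) (u : ℕ → Mat n ℝ) : Mat n Hyperreal :=
  Matrix.of fun i j => Hyperreal.ofSeq fun k => u k i j

/-- The nonstandard extension `S^♯` of a set `S` of real matrices: hyperreal matrices
represented by sequences landing in `S` on a set of indices in the ultrafilter. -/
def matSharp (n : ℕ) (S : Set (Mat n ℝ)) : Set (Mat n Hyperreal) :=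
  {A | ∃ u : ℕ → Mat n ℝ, (∀ᶠ k in hyperfilter ℕ, u k ∈ S) ∧ A = matOfSeq n u}

/-- The canonical embedding of real matrices into hyperreal matrices. -/
def matCast {n : ℕ} (A : Mat n ℝ) : Mat n Hyperreal :=
  Matrix.of fun i j => (A i j : Hyperreal)

/-- `μ(G)`: elements of `G^♯` all of whose entries are infinitesimally close to the
corresponding entries of the identity matrix. -/
def muSet (n : ℕ) (G : Set (Mat n ℝ)) : Set (Mat n Hyperreal) :=
  {A | A ∈ matSharp n G ∧ ∀ i j, Hyperreal.Infinitesimal (A i j - (1 : Mat n Hyperreal) i j)}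

/-- The coset `gH` is near `α`, i.e. `α ∈ μ(G)·g·H^♯`. -/
def NearCoset (n : ℕ) (G : Set (Mat n ℝ)) (g : Mat n ℝ) (H : Set (Mat n ℝ))
    (α : Mat n Hyperreal) : Prop :=
  α ∈ muSet n G * ({matCast g} * matSharp n H)

/-- The set of standard parts of the finite elements of a set of hyperreal matrices. -/
def matStSet (n : ℕ) (A : Set (Mat n Hyperreal)) : Set (Mat n ℝ) :=
  {B | ∃ a ∈ A, ∀ i j, Hyperreal.IsSt (a i j) (B i j)}

/-- A polynomial map `ℝ^d → Mat n ℝ`. -/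
def IsPolyMapVec (d n : ℕ) (F : (Fin d → ℝ) → Mat n ℝ) : Prop :=
  ∃ P : Fin n → Fin n → MvPolynomial (Fin d) ℝ,
    ∀ x i j, F x i j = MvPolynomial.eval x (P i j)

/-- The inclusion `ℝ →+* ℝ*` as a ring homomorphism. -/
def realHyperRingHom : ℝ →+* Hyperreal where
  toFun r := (r : Hyperreal)
  map_one' := Hyperreal.coe_one
  map_mul' := Hyperreal.coe_mul
  map_zero' := Hyperreal.coe_zero
  map_add' := Hyperreal.coe_add

/-- A semialgebraic subset of matrix space: a finite union of sets defined by finitely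
many polynomial equations and finitely many strict polynomial inequalities. -/
def IsSemialgebraic (n : ℕ) (S : Set (Mat n ℝ)) : Prop :=
  ∃ (k : ℕ) (P Q : Fin k → Finset (MvPolynomial (Fin n × Fin n) ℝ)),
    S = ⋃ t : Fin k, {A | (∀ p ∈ P t, MvPolynomial.eval (matEval A) p = 0) ∧
      ∀ q ∈ Q t, 0 < MvPolynomial.eval (matEval A) q}



/-- `F` is killed on `UT` by all `m`-fold right difference operators. -/
def Dg (n : ℕ) : ℕ → (Mat n ℝ → ℝ) → Prop
  | 0, F => ∀ g ∈ UTset n, F g = 0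
  | m + 1, F => ∀ a ∈ UTset n, Dg n m (fun g => F (g * a) - F g)

lemma UT_mul {n : ℕ} {a b : Mat n ℝ} (ha : a ∈ UTset n) (hb : b ∈ UTset n) :
    a * b ∈ UTset n := by
  constructor
  · intro i
    rw [Matrix.mul_apply, Finset.sum_eq_single i]
    · rw [ha.1, hb.1, one_mul]
    · intro k _ hk
      rcases lt_or_gt_of_ne hk with h | h
      · rw [ha.2 i k h, zero_mul]
      · rw [hb.2 k i h, mul_zero]
    · simp
  · intro i j hij
    rw [Matrix.mul_apply]
    apply Finset.sum_eq_zero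
    intro k _
    rcases lt_or_ge (k : ℕ) (i : ℕ) with h | h
    · rw [ha.2 i k h, zero_mul]
    · rw [hb.2 k j (by omega), mul_zero]

lemma UT_det {n : ℕ} {a : Mat n ℝ} (ha : a ∈ UTset n) : a.det = 1 := by
  rw [Matrix.det_of_isUpperTriangular]
  · simp [ha.1]
  · intro i j hij
    exact ha.2 i j hij

lemma Dg_congr {n : ℕ} (m : ℕ) : ∀ {F F' : Mat n ℝ → ℝ}, (∀ g ∈ UTset n, F g = F' g) →
    Dg n m F → Dg n m F' := by
  induction m with
  | zero => intro F F' h hF g hg; rw [← h g hg]; exact hF g hg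
  | succ m ih =>
    intro F F' h hF a ha
    refine ih ?_ (hF a ha)
    intro g hg
    simp only [h g hg, h _ (UT_mul hg ha)]

lemma Dg_zero {n : ℕ} (m : ℕ) : ∀ {F : Mat n ℝ → ℝ}, (∀ g ∈ UTset n, F g = 0) →
    Dg n m F := by
  induction m with
  | zero => intro F h; exact h
  | succ m ih =>
    intro F h a ha
    refine ih ?_
    intro g hg
    simp only [h g hg, h _ (UT_mul hg ha), sub_zero]

lemma Dg_succ {n : ℕ} (m : ℕ) : ∀ {F : Mat n ℝ → ℝ}, Dg n m F → Dg n (m + 1) F := by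
  induction m with
  | zero => intro F h; exact Dg_zero 1 h
  | succ m ih => intro F h a ha; exact ih (h a ha)

lemma Dg_mono {n : ℕ} {m k : ℕ} (h : m ≤ k) {F : Mat n ℝ → ℝ} (hF : Dg n m F) : Dg n k F := by
  induction h with
  | refl => exact hF
  | step _ ih => exact Dg_succ _ ih

lemma Dg_add {n : ℕ} (m : ℕ) : ∀ {F F' : Mat n ℝ → ℝ}, Dg n m F → Dg n m F' →
    Dg n m (fun g => F g + F' g) := by
  induction m with
  | zero => intro F F' h h' g hg; simp only [h g hg, h' g hg, add_zero]
  | succ m ih =>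
    intro F F' h h' a ha
    refine Dg_congr m ?_ (ih (h a ha) (h' a ha))
    intro g _
    ring

lemma Dg_mul {n : ℕ} (s : ℕ) : ∀ (m k : ℕ), m + k = s → ∀ {F F' : Mat n ℝ → ℝ},
    Dg n m F → Dg n k F' → Dg n s (fun g => F g * F' g) := by
  induction s using Nat.strong_induction_on with
  | _ s ih =>
    intro m k hs F F' h h'
    rcases m with _ | m
    · exact Dg_zero _ (fun g hg => by rw [h g hg, zero_mul])
    rcases k with _ | k
    · exact Dg_zero _ (fun g hg => by rw [h' g hg, mul_zero])
    obtain ⟨s, rfl⟩ : ∃ t, s = t + 1 := ⟨m + 1 + k, by omega⟩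
    intro a ha
    have h1 := ih s (by omega) m (k + 1) (by omega) (h a ha) h'
    have h2 := ih s (by omega) (m + 1) k (by omega) h (h' a ha)
    have h3 := ih (m + k) (by omega) m k rfl (h a ha) (h' a ha)
    have h3' := Dg_mono (k := s) (by omega) h3
    refine Dg_congr s ?_ (Dg_add s (Dg_add s h1 h2) h3')
    intro g _
    ring

/-- Functions of finite degree which are continuous. -/
def Nice (n : ℕ) (F : Mat n ℝ → ℝ) : Prop := Continuous F ∧ ∃ m, Dg n m F

lemma Nice.add {n : ℕ} {F F' : Mat n ℝ → ℝ} (h : Nice n F) (h' : Nice n F') :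
    Nice n (fun g => F g + F' g) := by
  obtain ⟨c, m, hm⟩ := h
  obtain ⟨c', m', hm'⟩ := h'
  exact ⟨c.add c', max m m', Dg_add _ (Dg_mono (le_max_left _ _) hm)
    (Dg_mono (le_max_right _ _) hm')⟩

lemma Nice.mul {n : ℕ} {F F' : Mat n ℝ → ℝ} (h : Nice n F) (h' : Nice n F') :
    Nice n (fun g => F g * F' g) := by
  obtain ⟨c, m, hm⟩ := h
  obtain ⟨c', m', hm'⟩ := h'
  exact ⟨c.mul c', m + m', Dg_mul _ m m' rfl hm hm'⟩

lemma Dg_const {n : ℕ} (c : ℝ) : Dg n 1 (fun _ => c) := by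
  intro a _ g _
  simp

lemma Nice.const {n : ℕ} (c : ℝ) : Nice n (fun _ => c) := ⟨continuous_const, 1, Dg_const c⟩

lemma Nice.sum {n : ℕ} {ι : Type*} (s : Finset ι) (F : ι → Mat n ℝ → ℝ)
    (h : ∀ i ∈ s, Nice n (F i)) : Nice n (fun g => ∑ i ∈ s, F i g) := by
  classical
  induction s using Finset.induction_on with
  | empty => simpa using Nice.const 0
  | insert a s ha ih =>
    simp only [Finset.sum_insert ha]
    exact (h a (by simp)).add (ih fun i hi => h i (by simp [hi]))

lemma Nice.prod {n : ℕ} {ι : Type*} (s : Finset ι) (F : ι → Mat n ℝ → ℝ)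
    (h : ∀ i ∈ s, Nice n (F i)) : Nice n (fun g => ∏ i ∈ s, F i g) := by
  classical
  induction s using Finset.induction_on with
  | empty => simpa using Nice.const 1
  | insert a s ha ih =>
    simp only [Finset.prod_insert ha]
    exact (h a (by simp)).mul (ih fun i hi => h i (by simp [hi]))

lemma Dg_sum {n : ℕ} (m : ℕ) {ι : Type*} (s : Finset ι) (F : ι → Mat n ℝ → ℝ)
    (h : ∀ i ∈ s, Dg n m (F i)) : Dg n m (fun g => ∑ i ∈ s, F i g) := by
  classical
  induction s using Finset.induction_on with
  | empty => exact Dg_zero _ (by simp)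
  | insert a s ha ih =>
    simp only [Finset.sum_insert ha]
    exact Dg_add _ (h a (by simp)) (ih fun i hi => h i (by simp [hi]))

lemma Dg_smul {n : ℕ} (m : ℕ) (c : ℝ) : ∀ {F : Mat n ℝ → ℝ}, Dg n m F →
    Dg n m (fun g => F g * c) := by
  induction m with
  | zero => intro F h g hg; simp only [h g hg, zero_mul]
  | succ m ih =>
    intro F h a ha
    exact Dg_congr m (fun g _ => by ring) (ih (h a ha))

lemma Dg_entry {n : ℕ} (i : Fin n) (s : ℕ) : ∀ j : Fin n, (j : ℕ) < s →
    Dg n (s + 1) (fun g => g i j) := by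
  induction s with
  | zero => intro j hj; omega
  | succ s ih =>
    intro j hj a ha
    have key : Dg n (s + 1) (fun g => ∑ k ∈ Finset.univ.filter (fun k : Fin n => k < j),
        g i k * a k j) := by
      apply Dg_sum
      intro k hk
      have : (k : ℕ) < (j : ℕ) := by simpa using hk
      exact Dg_smul _ _ (ih k (by omega))
    refine Dg_congr _ ?_ key
    intro g _
    have : ∑ k, g i k * a k j = (∑ k ∈ Finset.univ.filter (fun k : Fin n => k < j),
        g i k * a k j) + ∑ k ∈ Finset.univ.filter (fun k : Fin n => ¬ k < j),
        g i k * a k j := (Finset.sum_filter_add_sum_filter_not _ _ _).symm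
    change _ = (g * a) i j - g i j
    rw [Matrix.mul_apply, this]
    have : ∑ k ∈ Finset.univ.filter (fun k : Fin n => ¬ k < j), g i k * a k j = g i j := by
      rw [Finset.sum_eq_single j]
      · rw [ha.1, mul_one]
      · intro k hk hkj
        have h1 : ¬ k < j := by simpa using hk
        have h2 : (j : ℕ) < (k : ℕ) := by
          have := Fin.val_ne_of_ne hkj
          have h3 : ¬ (k : ℕ) < (j : ℕ) := h1
          omega
        rw [ha.2 k j h2, mul_zero]
      · simp
    rw [this]
    ring

lemma Nice.entry {n : ℕ} (i j : Fin n) : Nice n (fun g => g i j) :=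
  ⟨by fun_prop, _, Dg_entry i ((j : ℕ) + 1) j (by omega)⟩

lemma Nice.adj {n : ℕ} (i j : Fin n) : Nice n (fun g => g.adjugate i j) := by
  simp only [Matrix.adjugate_apply, Matrix.det_apply']
  apply Nice.sum
  intro σ _
  apply (Nice.const _).mul
  apply Nice.prod
  intro k _
  by_cases h : σ k = j
  · simp only [Matrix.updateRow_apply, h, if_true]
    exact Nice.const _
  · simp only [Matrix.updateRow_apply, h, if_false]
    exact Nice.entry _ _

lemma Nice.poly {n : ℕ} {σ : Type*} (p : MvPolynomial σ ℝ) (f : σ → Mat n ℝ → ℝ)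
    (hf : ∀ i, Nice n (f i)) : Nice n (fun g => MvPolynomial.eval (fun i => f i g) p) := by
  induction p using MvPolynomial.induction_on with
  | C a => simpa using Nice.const a
  | add p q hp hq => simpa using hp.add hq
  | mul_X p i hp => simpa using hp.mul (hf i)

lemma UT_inv {n : ℕ} {a : Mat n ℝ} (ha : a ∈ UTset n) : a * a⁻¹ = 1 ∧ a⁻¹ * a = 1 := by
  have : IsUnit a.det := by rw [UT_det ha]; exact isUnit_one
  exact ⟨Matrix.mul_nonsing_inv a this, Matrix.nonsing_inv_mul a this⟩

lemma bounded_const {n : ℕ} {G : Set (Mat n ℝ)} (hU : G ⊆ UTset n) (h1 : (1 : Mat n ℝ) ∈ G)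
    (hmul : ∀ a ∈ G, ∀ b ∈ G, a * b ∈ G) (m : ℕ) : ∀ F : Mat n ℝ → ℝ, Dg n m F →
    (∃ C, ∀ g ∈ G, |F g| ≤ C) → ∀ g ∈ G, F g = F 1 := by
  induction m with
  | zero => intro F hF _ g hg; rw [hF g (hU hg), hF 1 (hU h1)]
  | succ m ih =>
    rintro F hF ⟨C, hC⟩ g hg
    have hc := ih _ (hF g (hU hg)) ⟨C + C, fun h hh => (abs_sub _ _).trans
      (add_le_add (hC _ (hmul _ hh _ hg)) (hC _ hh))⟩
    simp only [one_mul] at hc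
    have hp : ∀ k : ℕ, g ^ k ∈ G ∧ F (g ^ k) = F 1 + k * (F g - F 1) := by
      intro k
      induction k with
      | zero => simpa using h1
      | succ k ihk =>
        refine ⟨by rw [pow_succ]; exact hmul _ ihk.1 _ hg, ?_⟩
        have := hc _ ihk.1
        rw [pow_succ]
        push_cast
        linarith [ihk.2]
    by_contra hne
    have hpos : 0 < |F g - F 1| := abs_pos.mpr (sub_ne_zero.mpr hne)
    obtain ⟨k, hk⟩ := exists_nat_gt ((C + C) / |F g - F 1|)
    rw [div_lt_iff₀ hpos] at hk
    have h2 : (k : ℝ) * (F g - F 1) = F (g ^ k) - F 1 := by rw [(hp k).2]; ring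
    have h3 : (k : ℝ) * |F g - F 1| = |F (g ^ k) - F 1| := by
      rw [← h2, abs_mul, Nat.abs_cast]
    have h4 := (abs_sub (F (g ^ k)) (F 1)).trans (add_le_add (hC _ (hp k).1) (hC _ h1))
    linarith

lemma lattice_dense {n : ℕ} {G Γ : Set (Mat n ℝ)} (hU : G ⊆ UTset n) (h1 : (1 : Mat n ℝ) ∈ G)
    (hmul : ∀ a ∈ G, ∀ b ∈ G, a * b ∈ G) (hΓ : IsLatticeIn n G Γ) (m : ℕ) :
    ∀ F : Mat n ℝ → ℝ, Continuous F → Dg n m F → (∀ γ ∈ Γ, F γ = 0) → ∀ g ∈ G, F g = 0 := by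
  obtain ⟨hΓG, h1Γ, hmΓ, -, -, K, hKG, hK, hKΓ⟩ := hΓ
  induction m with
  | zero => intro F _ hF _ g hg; exact hF g (hU hg)
  | succ m ih =>
    intro F hcont hF hz g hg
    have hinv : ∀ γ ∈ Γ, ∀ g ∈ G, F (g * γ) = F g := by
      intro γ hγ g hg
      have := ih (fun g => F (g * γ) - F g) (by fun_prop) (hF γ (hU (hΓG hγ)))
        (fun δ hδ => by rw [hz _ (hmΓ _ hδ _ hγ), hz _ hδ, sub_zero]) g hg
      linarith
    obtain ⟨C, hC⟩ := hK.exists_bound_of_continuousOn hcont.continuousOn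
    rw [bounded_const hU h1 hmul _ F hF ⟨C, ?_⟩ g hg, hz 1 h1Γ]
    intro g hg
    obtain ⟨k, hk, γ, hγ, rfl⟩ := hKΓ g hg
    rw [hinv γ hγ k (hKG hk)]
    exact hC k hk

/-- Conjugation of an algebraic rational subgroup by a lattice element. -/
lemma conj_rational {n : ℕ} {G Γ H₀ : Set (Mat n ℝ)} (hG : IsRealUnipotentGroup n G)
    (hΓ : IsLatticeIn n G Γ) (hH₀ : IsRealAlgSubgroup n G H₀) (hrat : IsRationalFor n Γ H₀)
    (c d : Mat n ℝ) (hc : c ∈ Γ) (hd : d ∈ Γ) (hcd : c * d = 1) :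
    IsRealAlgSubgroup n G {A | A ∈ G ∧ d * A * c ∈ H₀} ∧
      IsRationalFor n Γ {A | A ∈ G ∧ d * A * c ∈ H₀} := by
  have hdc : d * c = 1 := mul_eq_one_comm.mp hcd
  have hcd' : ∀ x : Mat n ℝ, c * (d * x) = x := fun x => by rw [← mul_assoc, hcd, one_mul]
  have hdc' : ∀ x : Mat n ℝ, d * (c * x) = x := fun x => by rw [← mul_assoc, hdc, one_mul]
  obtain ⟨⟨S, hS⟩, hG1, hGm, hGi⟩ := hG
  obtain ⟨hH₀G, ⟨T, hT⟩, hH1, hHm, hHi⟩ := hH₀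
  obtain ⟨hΓG, h1Γ, hmΓ, hiΓ, hdisc, -⟩ := hΓ
  obtain ⟨-, -, -, -, -, K, hKG, hK, hKΓ⟩ := hrat
  have hU : G ⊆ UTset n := by rw [hS]; exact fun A hA => hA.1
  have hinv : ∀ a ∈ G, d * a⁻¹ * c = (d * a * c)⁻¹ := by
    intro a ha
    symm
    apply Matrix.inv_eq_right_inv
    simp only [mul_assoc, hcd']
    rw [← mul_assoc a, (UT_inv (hU ha)).1, one_mul, hdc]
  have hone : (1 : Mat n ℝ) ∈ {A | A ∈ G ∧ d * A * c ∈ H₀} :=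
    ⟨hG1, by rw [mul_one, hdc]; exact hH1⟩
  have hmulL : ∀ a ∈ {A | A ∈ G ∧ d * A * c ∈ H₀}, ∀ b ∈ {A | A ∈ G ∧ d * A * c ∈ H₀},
      a * b ∈ {A | A ∈ G ∧ d * A * c ∈ H₀} := by
    rintro a ⟨ha, ha'⟩ b ⟨hb, hb'⟩
    refine ⟨hGm _ ha _ hb, ?_⟩
    have := hHm _ ha' _ hb'
    simpa only [mul_assoc, hcd'] using this
  have hinvL : ∀ a ∈ {A | A ∈ G ∧ d * A * c ∈ H₀}, a⁻¹ ∈ {A | A ∈ G ∧ d * A * c ∈ H₀} := by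
    rintro a ⟨ha, ha'⟩
    refine ⟨hGi _ ha, ?_⟩
    rw [hinv a ha]
    exact hHi _ ha'
  refine ⟨⟨fun A hA => hA.1, ⟨?_, hone, hmulL, hinvL⟩⟩, ?_⟩
  · let f : Fin n × Fin n → MvPolynomial (Fin n × Fin n) ℝ := fun ij =>
      ∑ k, (∑ l, MvPolynomial.C (d ij.1 l) * MvPolynomial.X (l, k)) * MvPolynomial.C (c k ij.2)
    have hf : ∀ (A : Mat n ℝ) p, MvPolynomial.eval (matEval A) (MvPolynomial.bind₁ f p) =
        MvPolynomial.eval (matEval (d * A * c)) p := by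
      intro A p
      rw [MvPolynomial.eval, MvPolynomial.eval₂Hom_bind₁]
      congr 2
      funext ij
      simp [f, matEval, Matrix.mul_apply]
    refine ⟨S ∪ (MvPolynomial.bind₁ f) '' T, ?_⟩
    ext A
    constructor
    · rintro ⟨hA, hA'⟩
      refine ⟨hU hA, ?_⟩
      rintro p (hp | ⟨p, hp, rfl⟩)
      · rw [hS] at hA; exact hA.2 p hp
      · rw [hf]; rw [hT] at hA'; exact hA'.2 p hp
    · rintro ⟨hA, hA'⟩
      refine ⟨by rw [hS]; exact ⟨hA, fun p hp => hA' p (Or.inl hp)⟩, ?_⟩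
      rw [hT]
      refine ⟨UT_mul (UT_mul (hU (hΓG hd)) hA) (hU (hΓG hc)), fun p hp => ?_⟩
      rw [← hf]
      exact hA' _ (Or.inr ⟨p, hp, rfl⟩)
  · refine ⟨Set.inter_subset_right, ⟨h1Γ, hone⟩, ?_, ?_, ?_, ?_⟩
    · exact fun a ha b hb => ⟨hmΓ _ ha.1 _ hb.1, hmulL _ ha.2 _ hb.2⟩
    · exact fun a ha => ⟨hiΓ _ ha.1, hinvL _ ha.2⟩
    · exact DiscreteTopology.of_subset hdisc Set.inter_subset_left
    · refine ⟨(fun x => c * x * d) '' K, ?_, hK.image (by fun_prop), ?_⟩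
      · rintro _ ⟨k, hk, rfl⟩
        refine ⟨hGm _ (hGm _ (hΓG hc) _ (hH₀G (hKG hk))) _ (hΓG hd), ?_⟩
        simp only [mul_assoc, hdc', hdc, mul_one]
        exact hKG hk
      · rintro g ⟨hg, hg'⟩
        obtain ⟨k, hk, γ, ⟨hγ, hγ'⟩, he⟩ := hKΓ _ hg'
        refine ⟨_, ⟨k, hk, rfl⟩, c * γ * d, ⟨hmΓ _ (hmΓ _ hc _ hγ) _ hd,
          hGm _ (hGm _ (hΓG hc) _ (hH₀G hγ')) _ (hΓG hd), ?_⟩, ?_⟩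
        · simp only [mul_assoc, hdc', hdc, mul_one]
          exact hγ'
        · simp only [mul_assoc, hdc']
          rw [← mul_assoc k, ← he]
          simp only [mul_assoc, hcd', hcd, mul_one]

/-- the smallest `Γ`-rational subgroup containing a normal subgroup is normal. -/
theorem stmt9 {n : ℕ} (G : Set (Mat n ℝ)) (hG : IsRealUnipotentGroup n G)
    (Γ : Set (Mat n ℝ)) (hΓ : IsLatticeIn n G Γ)
    (H : Set (Mat n ℝ)) (hH : IsRealAlgSubgroup n G H) (hHnormal : IsNormalIn n G H)
    (H₀ : Set (Mat n ℝ)) (hH₀ : IsRealAlgSubgroup n G H₀) (hHH₀ : H ⊆ H₀)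
    (hH₀rat : IsRationalFor n Γ H₀)
    (hH₀min : ∀ L : Set (Mat n ℝ), IsRealAlgSubgroup n G L → IsRationalFor n Γ L → H ⊆ L →
      H₀ ⊆ L) :
    IsNormalIn n G H₀ := by
  have hU : G ⊆ UTset n := by
    obtain ⟨⟨S, hS⟩, -⟩ := hG
    rw [hS]; exact fun A hA => hA.1
  have hconj : ∀ γ ∈ Γ, ∀ x ∈ H₀, γ * x * γ⁻¹ ∈ H₀ := by
    intro γ hγ x hx
    have hγi := hΓ.2.2.2.1 γ hγ
    obtain ⟨e1, e2⟩ := UT_inv (hU (hΓ.1 hγ))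
    obtain ⟨hL, hLr⟩ := conj_rational hG hΓ hH₀ hH₀rat γ⁻¹ γ hγi hγ e2
    exact (hH₀min _ hL hLr
      (fun h hh => ⟨hH.1 hh, hHH₀ (hHnormal γ (hΓ.1 hγ) h hh)⟩) hx).2
  intro g hg x hx
  have hgx : g * x * g⁻¹ ∈ G :=
    hG.2.2.1 _ (hG.2.2.1 _ hg _ (hH₀.1 hx)) _ (hG.2.2.2 _ hg)
  obtain ⟨⟨T, hT⟩, -⟩ := hH₀.2
  have hadj : ∀ a ∈ G, a⁻¹ = a.adjugate := by
    intro a ha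
    rw [Matrix.inv_def, UT_det (hU ha)]
    simp
  rw [hT]
  refine ⟨hU hgx, fun p hp => ?_⟩
  have hnice : Nice n (fun a : Mat n ℝ => MvPolynomial.eval (matEval (a * x * a.adjugate)) p) := by
    refine Nice.poly p (fun ij (a : Mat n ℝ) => (a * x * a.adjugate : Mat n ℝ) ij.1 ij.2) ?_
    intro ij
    simp only [Matrix.mul_apply]
    apply Nice.sum
    intro k _
    refine Nice.mul ?_ (Nice.adj _ _)
    apply Nice.sum
    intro l _
    exact (Nice.entry _ _).mul (Nice.const _)
  obtain ⟨hcont, m, hm⟩ := hnice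
  rw [hadj g hg]
  refine lattice_dense hU hG.2.1 hG.2.2.1 hΓ m _ hcont hm ?_ g hg
  intro γ hγ
  have := hconj γ hγ x hx
  rw [hT, hadj γ (hΓ.1 hγ)] at this
  exact this.2 p hp
end
end

section
/- Let G ⊆ UT(n,ℝ) be a real unipotent group and let H be a real algebraic subgroup of G with H ≠ G. Then there exists a real algebraic subgroup N of G such that H ⊆ N, N ≠ G, and N is normal in G. -/
open Pointwise Filter

noncomputable section

/-- Matrices supported on `i + k ≤ j`. -/
def JSet (n k : ℕ) : Set (Mat n ℝ) := {A | ∀ i j : Fin n, (j : ℕ) < (i : ℕ) + k → A i j = 0}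

lemma JSet_mul {n k l : ℕ} {A B : Mat n ℝ} (hA : A ∈ JSet n k) (hB : B ∈ JSet n l) :
    A * B ∈ JSet n (k + l) := by
  intro i j hij
  rw [Matrix.mul_apply]
  refine Finset.sum_eq_zero fun m _ => ?_
  by_cases h : (m : ℕ) < (i : ℕ) + k
  · rw [hA i m h, zero_mul]
  · rw [hB m j (by omega), mul_zero]

lemma JSet_sub {n k : ℕ} {A B : Mat n ℝ} (hA : A ∈ JSet n k) (hB : B ∈ JSet n k) :
    A - B ∈ JSet n k := by
  intro i j hij
  rw [Matrix.sub_apply, hA i j hij, hB i j hij, sub_zero]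

lemma UT_J0 {n : ℕ} {A : Mat n ℝ} (hA : A ∈ UTset n) : A ∈ JSet n 0 :=
  fun i j hij => hA.2 i j (by omega)

lemma UT_J1 {n : ℕ} {A : Mat n ℝ} (hA : A ∈ UTset n) : A - 1 ∈ JSet n 1 := by
  intro i j hij
  rw [Matrix.sub_apply]
  by_cases h : i = j
  · subst h; rw [hA.1, Matrix.one_apply_eq, sub_self]
  · have h' : (i : ℕ) ≠ j := fun e => h (Fin.ext e)
    rw [hA.2 i j (by omega), Matrix.one_apply_ne h, sub_self]

lemma UT_det_s11 {n : ℕ} {A : Mat n ℝ} (hA : A ∈ UTset n) : A.det = 1 := by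
  rw [Matrix.det_of_upperTriangular]
  · exact Finset.prod_eq_one fun i _ => hA.1 i
  · intro i j hij
    exact hA.2 i j hij

lemma UT_unit {n : ℕ} {A : Mat n ℝ} (hA : A ∈ UTset n) : IsUnit A.det := by
  rw [UT_det_s11 hA]; exact isUnit_one

lemma UT_inv_s11 {n : ℕ} {A : Mat n ℝ} (hA : A ∈ UTset n) : A⁻¹ = A.adjugate := by
  rw [Matrix.inv_def, UT_det_s11 hA]; simp

lemma IsRealUnipotentGroup.ut {n : ℕ} {G : Set (Mat n ℝ)} (h : IsRealUnipotentGroup n G)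
    {g : Mat n ℝ} (hg : g ∈ G) : g ∈ UTset n := by
  obtain ⟨⟨S, hS⟩, -⟩ := h
  rw [hS] at hg
  exact hg.1

/-- The polynomial `g ↦ p (L g * x * R g)`. -/
def pullPoly {n : ℕ} (L : Matrix (Fin n) (Fin n) (MvPolynomial (Fin n × Fin n) ℝ))
    (p : MvPolynomial (Fin n × Fin n) ℝ) : MvPolynomial (Fin n × Fin n) ℝ :=
  MvPolynomial.bind₁ (fun ij : Fin n × Fin n => L ij.1 ij.2) p

lemma eval_pullPoly {n : ℕ} (L : Matrix (Fin n) (Fin n) (MvPolynomial (Fin n × Fin n) ℝ))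
    (p : MvPolynomial (Fin n × Fin n) ℝ) (g : Mat n ℝ) :
    MvPolynomial.eval (matEval g) (pullPoly L p) =
      MvPolynomial.eval (matEval ((MvPolynomial.eval (matEval g)).mapMatrix L)) p := by
  unfold pullPoly
  rw [MvPolynomial.eval, MvPolynomial.eval₂Hom_bind₁]
  rfl

/-- The generic matrix. -/
def genMat (n : ℕ) : Matrix (Fin n) (Fin n) (MvPolynomial (Fin n × Fin n) ℝ) :=
  Matrix.of fun i j => MvPolynomial.X (i, j)

/-- A constant matrix. -/
def constMat {n : ℕ} (x : Mat n ℝ) : Matrix (Fin n) (Fin n) (MvPolynomial (Fin n × Fin n) ℝ) :=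
  x.map MvPolynomial.C

lemma eval_genMat {n : ℕ} (g : Mat n ℝ) :
    (MvPolynomial.eval (matEval g)).mapMatrix (genMat n) = g := by
  ext i j; simp [genMat, matEval]

lemma eval_constMat {n : ℕ} (g x : Mat n ℝ) :
    (MvPolynomial.eval (matEval g)).mapMatrix (constMat x) = x := by
  ext i j; simp [constMat]

/-- The normalizer of `N` in `G`. -/
def nzer {n : ℕ} (G N : Set (Mat n ℝ)) : Set (Mat n ℝ) :=
  {g | g ∈ G ∧ ∀ x ∈ N, g * x * g⁻¹ ∈ N ∧ g⁻¹ * x * g ∈ N}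

lemma nzer_alg {n : ℕ} {G N : Set (Mat n ℝ)} (hG : IsRealUnipotentGroup n G)
    (hN : IsRealAlgSubgroup n G N) : IsRealAlgSubgroup n G (nzer G N) := by
  have hut : ∀ g ∈ G, g ∈ UTset n := fun g hg => hG.ut hg
  obtain ⟨hNG, hNr⟩ := hN
  obtain ⟨⟨S, hS⟩, hG1, hGm, hGi⟩ := hG
  obtain ⟨⟨T, hT⟩, hN1, hNm, hNi⟩ := hNr
  have memN : ∀ y ∈ G, (y ∈ N ↔ ∀ p ∈ T, MvPolynomial.eval (matEval y) p = 0) := by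
    intro y hy
    constructor
    · intro h; rw [hT] at h; exact h.2
    · intro h; rw [hT]; exact ⟨hut y hy, h⟩
  have memG : ∀ y, y ∈ G ↔ y ∈ UTset n ∧ ∀ p ∈ S, MvPolynomial.eval (matEval y) p = 0 := by
    intro y
    constructor
    · intro h; rw [hS] at h; exact h
    · intro h; rw [hS]; exact h
  refine ⟨fun g hg => hg.1, ⟨S ∪ {q | ∃ x ∈ N, ∃ p ∈ T,
      q = pullPoly (genMat n * constMat x * (genMat n).adjugate) p ∨
      q = pullPoly ((genMat n).adjugate * constMat x * genMat n) p}, ?_⟩, ?_, ?_, ?_⟩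
  · ext g
    have e1 : ∀ x p, g ∈ UTset n → MvPolynomial.eval (matEval g)
        (pullPoly (genMat n * constMat x * (genMat n).adjugate) p) =
        MvPolynomial.eval (matEval (g * x * g⁻¹)) p := by
      intro x p hg
      rw [eval_pullPoly, map_mul, map_mul, RingHom.map_adjugate, eval_genMat, eval_constMat,
        UT_inv_s11 hg]
    have e2 : ∀ x p, g ∈ UTset n → MvPolynomial.eval (matEval g)
        (pullPoly ((genMat n).adjugate * constMat x * genMat n) p) =
        MvPolynomial.eval (matEval (g⁻¹ * x * g)) p := by
      intro x p hg
      rw [eval_pullPoly, map_mul, map_mul, RingHom.map_adjugate, eval_genMat, eval_constMat,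
        UT_inv_s11 hg]
    constructor
    · rintro ⟨hg, h⟩
      refine ⟨hut g hg, ?_⟩
      rintro p (hp | ⟨x, hx, p, hp, rfl | rfl⟩)
      · exact ((memG g).1 hg).2 p hp
      · rw [e1 x p (hut g hg)]
        exact (memN _ (hNG (h x hx).1)).1 (h x hx).1 p hp
      · rw [e2 x p (hut g hg)]
        exact (memN _ (hNG (h x hx).2)).1 (h x hx).2 p hp
    · rintro ⟨hu, h⟩
      have hg : g ∈ G := (memG g).2 ⟨hu, fun p hp => h p (Or.inl hp)⟩
      refine ⟨hg, fun x hx => ⟨?_, ?_⟩⟩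
      · refine (memN _ (hGm _ (hGm _ hg _ (hNG hx)) _ (hGi _ hg))).2 fun p hp => ?_
        rw [← e1 x p hu]
        exact h _ (Or.inr ⟨x, hx, p, hp, Or.inl rfl⟩)
      · refine (memN _ (hGm _ (hGm _ (hGi _ hg) _ (hNG hx)) _ hg)).2 fun p hp => ?_
        rw [← e2 x p hu]
        exact h _ (Or.inr ⟨x, hx, p, hp, Or.inr rfl⟩)
  · refine ⟨hG1, fun x hx => ?_⟩
    simpa using hx
  · rintro a ⟨ha, ha'⟩ b ⟨hb, hb'⟩
    refine ⟨hGm a ha b hb, fun x hx => ?_⟩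
    have h1 := (ha' _ (hb' x hx).1).1
    have h2 := (hb' _ (ha' x hx).2).2
    rw [Matrix.mul_inv_rev]
    simp only [Matrix.mul_assoc] at h1 h2 ⊢
    exact ⟨h1, h2⟩
  · rintro a ⟨ha, ha'⟩
    refine ⟨hGi a ha, fun x hx => ?_⟩
    rw [Matrix.nonsing_inv_nonsing_inv _ (UT_unit (hut a ha))]
    exact ⟨(ha' x hx).2, (ha' x hx).1⟩

lemma comm_J {n k : ℕ} {g x : Mat n ℝ} (hg : g ∈ UTset n) (hgi : g⁻¹ ∈ UTset n)
    (hx : x ∈ UTset n) (hxi : x⁻¹ ∈ UTset n) (h : g - 1 ∈ JSet n k) :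
    g * x * g⁻¹ * x⁻¹ - 1 ∈ JSet n (k + 1) := by
  have e : g * x * g⁻¹ * x⁻¹ - 1 =
      ((g - 1) * (x - 1) - (x - 1) * (g - 1)) * g⁻¹ * x⁻¹ := by
    have e0 : (g - 1) * (x - 1) - (x - 1) * (g - 1) = g * x - x * g := by noncomm_ring
    rw [e0, sub_mul, sub_mul, Matrix.mul_assoc x g, Matrix.mul_nonsing_inv _ (UT_unit hg),
      Matrix.mul_one, Matrix.mul_nonsing_inv _ (UT_unit hx)]
  rw [e]
  have h1 := JSet_mul h (UT_J1 hx)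
  have h2 := JSet_mul (UT_J1 hx) h
  rw [add_comm] at h2
  have h3 := JSet_mul (JSet_mul (JSet_sub h1 h2) (UT_J0 hgi)) (UT_J0 hxi)
  exact h3

lemma inv_J {n k : ℕ} {g : Mat n ℝ} (hg : g ∈ UTset n) (hgi : g⁻¹ ∈ UTset n)
    (h : g - 1 ∈ JSet n k) : g⁻¹ - 1 ∈ JSet n k := by
  have e : g⁻¹ - 1 = 0 - (g - 1) * g⁻¹ := by
    rw [sub_mul, Matrix.mul_nonsing_inv _ (UT_unit hg)]; noncomm_ring
  rw [e]
  exact JSet_sub (fun _ _ _ => rfl) (JSet_mul h (UT_J0 hgi))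

/-- If `G ∩ (1 + J^(k+1))` lies in `N`, then `G ∩ (1 + J^k)` normalizes `N`. -/
lemma nzer_step {n k : ℕ} {G N : Set (Mat n ℝ)} (hG : IsRealUnipotentGroup n G)
    (hN : IsRealAlgSubgroup n G N) (h : ∀ g ∈ G, g - 1 ∈ JSet n (k + 1) → g ∈ N) :
    ∀ g ∈ G, g - 1 ∈ JSet n k → g ∈ nzer G N := by
  obtain ⟨-, hG1, hGm, hGi⟩ := id hG
  obtain ⟨hNG, -, hN1, hNm, hNi⟩ := hN
  have key : ∀ g ∈ G, g - 1 ∈ JSet n k → ∀ x ∈ N, g * x * g⁻¹ ∈ N := by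
    intro g hg hk x hx
    have hxG := hNG hx
    have h1 := h _ (hGm _ (hGm _ (hGm _ hg _ hxG) _ (hGi _ hg)) _ (hGi _ hxG))
      (comm_J (hG.ut hg) (hG.ut (hGi _ hg)) (hG.ut hxG) (hG.ut (hGi _ hxG)) hk)
    have h2 := hNm _ h1 _ hx
    rwa [Matrix.nonsing_inv_mul_cancel_right _ _ (UT_unit (hG.ut hxG))] at h2
  intro g hg hk
  refine ⟨hg, fun x hx => ⟨key g hg hk x hx, ?_⟩⟩
  have := key _ (hGi _ hg) (inv_J (hG.ut hg) (hG.ut (hGi _ hg)) hk) x hx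
  rwa [Matrix.nonsing_inv_nonsing_inv _ (UT_unit (hG.ut hg))] at this

lemma main_ind {n : ℕ} {G : Set (Mat n ℝ)} (hG : IsRealUnipotentGroup n G) (k : ℕ) :
    ∀ H : Set (Mat n ℝ), IsRealAlgSubgroup n G H → H ≠ G →
      (∀ g ∈ G, g - 1 ∈ JSet n k → g ∈ H) →
      ∃ N : Set (Mat n ℝ), IsRealAlgSubgroup n G N ∧ H ⊆ N ∧ N ≠ G ∧ IsNormalIn n G N := by
  induction k with
  | zero =>
    intro H hH hne h
    refine absurd (Set.Subset.antisymm hH.1 fun g hg => h g hg ?_) hne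
    intro i j hij
    exact UT_J1 (hG.ut hg) i j (by omega)
  | succ k ih =>
    intro H hH hne h
    by_cases hn : nzer G H = G
    · refine ⟨H, hH, subset_rfl, hne, fun g hg x hx => ?_⟩
      rw [← hn] at hg
      exact (hg.2 x hx).1
    · obtain ⟨N, h1, h2, h3⟩ := ih _ (nzer_alg hG hH) hn (nzer_step hG hH h)
      refine ⟨N, h1, fun x hx => h2 ⟨hH.1 hx, fun y hy => ?_⟩, h3⟩
      obtain ⟨-, -, -, hm, hi⟩ := hH
      exact ⟨hm _ (hm _ hx _ hy) _ (hi _ hx), hm _ (hm _ (hi _ hx) _ hy) _ hx⟩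

/-- a proper real algebraic subgroup is contained in a proper normal one. -/
theorem stmt11 {n : ℕ} (G : Set (Mat n ℝ)) (hG : IsRealUnipotentGroup n G)
    (H : Set (Mat n ℝ)) (hH : IsRealAlgSubgroup n G H) (hne : H ≠ G) :
    ∃ N : Set (Mat n ℝ), IsRealAlgSubgroup n G N ∧ H ⊆ N ∧ N ≠ G ∧ IsNormalIn n G N := by
  refine main_ind hG n H hH hne fun g _ hk => ?_
  have : g = 1 := by
    rw [← sub_eq_zero]
    ext i j
    exact hk i j (by omega)
  rw [this]
  exact hH.2.2.1
end
end

section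
/- Let G₁ ⊆ UT(n₁,ℝ) and G₂ ⊆ UT(n₂,ℝ) be real unipotent groups and let f : G₁ → G₂ be a continuous group homomorphism. Then f is a polynomial map: for each pair of indices (i,j), there is a real polynomial p_{ij} in n₁² variables such that the (i,j) matrix entry of f(g) equals p_{ij} evaluated at the matrix entries of g, for every g ∈ G₁. -/
open Pointwise Filter

noncomputable section

open Polynomial in
/-- truncated exponential polynomial -/
def Ep (m : ℕ) : Polynomial ℝ := ∑ k ∈ Finset.range m, C ((k.factorial : ℝ)⁻¹) * X ^ k

open Polynomial in
/-- truncated logarithm polynomial -/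
def Lp (m : ℕ) : Polynomial ℝ := ∑ k ∈ Finset.range m, C ((-1) ^ k / ((k : ℝ) + 1)) * X ^ (k + 1)

section polys
open Polynomial

lemma Ep_succ (m : ℕ) : Ep (m + 1) = Ep m + C ((m.factorial : ℝ)⁻¹) * X ^ m := by
  simp [Ep, Finset.sum_range_succ]

lemma Ep_deriv (m : ℕ) : derivative (Ep (m + 1)) = Ep m := by
  induction m with
  | zero => simp [Ep]
  | succ m ih =>
    rw [Ep_succ, derivative_add, ih, Ep_succ m]
    congr 1
    rw [derivative_C_mul_X_pow]
    simp only [Nat.add_sub_cancel]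
    congr 2
    have : (m.factorial : ℝ) ≠ 0 := by positivity
    rw [Nat.factorial_succ]
    push_cast
    field_simp

lemma Lp_deriv (m : ℕ) : derivative (Lp m) * (1 + X) = 1 - (-X) ^ m := by
  have : derivative (Lp m) = ∑ k ∈ Finset.range m, (-X : ℝ[X]) ^ k := by
    rw [Lp, derivative_sum]
    refine Finset.sum_congr rfl fun k _ => ?_
    rw [derivative_C_mul_X_pow]
    have h : ((-1 : ℝ) ^ k / ((k : ℝ) + 1)) * ((k + 1 : ℕ) : ℝ) = (-1) ^ k := by
      have : (k : ℝ) + 1 ≠ 0 := by positivity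
      push_cast
      field_simp
    rw [h, neg_pow (X : ℝ[X])]
    simp
  rw [this]
  have := geom_sum_mul (-X : ℝ[X]) m
  linear_combination -this

lemma X_dvd_Lp (m : ℕ) : (X : ℝ[X]) ∣ Lp m := by
  refine Finset.dvd_sum fun k _ => ?_
  rw [pow_succ]
  exact ⟨C ((-1) ^ k / ((k : ℝ) + 1)) * X ^ k, by ring⟩

lemma Ep_coeff_zero (m : ℕ) : (Ep (m + 1)).coeff 0 = 1 := by
  induction m with
  | zero => simp [Ep]
  | succ m ih => rw [Ep_succ, coeff_add, ih]; simp

lemma X_dvd_Ep (m : ℕ) : (X : ℝ[X]) ∣ Ep (m + 1) - 1 := by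
  rw [X_dvd_iff]; simp [Ep_coeff_zero]

lemma Ep_coeff_one (m : ℕ) : (Ep (m + 2)).coeff 1 = 1 := by
  induction m with
  | zero => simp [Ep, Finset.sum_range_succ, coeff_one]
  | succ m ih => rw [Ep_succ, coeff_add, ih]; simp [coeff_X_pow]

lemma Lp_coeff_zero (m : ℕ) : (Lp m).coeff 0 = 0 := X_dvd_iff.1 (X_dvd_Lp m)

lemma Lp_coeff_one (m : ℕ) : (Lp (m + 1)).coeff 1 = 1 := by
  induction m with
  | zero => simp [Lp]
  | succ m ih =>
    rw [Lp, Finset.sum_range_succ, ← Lp, coeff_add, ih]; simp [coeff_X_pow]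

lemma Ep_comp_Lp (m : ℕ) : (X : ℝ[X]) ^ (m + 1) ∣ (Ep (m + 1)).comp (Lp m) - (1 + X) := by
  set F := (Ep (m + 1)).comp (Lp m) with hF
  have h1 : derivative F * (1 + X) =
      (F - C ((m.factorial : ℝ)⁻¹) * (Lp m) ^ m) * (1 - (-X) ^ m) := by
    rw [hF, derivative_comp, Ep_deriv, Ep_succ]
    simp only [add_comp, mul_comp, C_comp, X_pow_comp]
    linear_combination ((Ep m).comp (Lp m)) * Lp_deriv m
  set Q := F - (1 + X) with hQ
  have h2 : (X : ℝ[X]) ^ m ∣ derivative Q * (1 + X) - Q := by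
    have e : derivative Q * (1 + X) - Q = - F * (-X) ^ m
        - C ((m.factorial : ℝ)⁻¹) * (Lp m) ^ m * (1 - (-X) ^ m) := by
      have : derivative Q = derivative F - 1 := by simp [hQ]
      rw [this, hQ]
      linear_combination h1
    rw [e]
    refine dvd_sub (Dvd.dvd.mul_left ?_ _) (Dvd.dvd.mul_right (Dvd.dvd.mul_left ?_ _) _)
    · rw [neg_pow]; exact Dvd.intro_left _ rfl
    · exact pow_dvd_pow_of_dvd (X_dvd_Lp m) m
  rw [X_pow_dvd_iff] at h2 ⊢
  have h3 : ∀ k, k < m + 1 → Q.coeff k = 0 := by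
    intro k
    induction k with
    | zero =>
      intro _
      rw [hQ, hF, coeff_sub, coeff_zero_eq_eval_zero ((Ep (m+1)).comp (Lp m)), eval_comp,
        ← coeff_zero_eq_eval_zero, Lp_coeff_zero, ← coeff_zero_eq_eval_zero, Ep_coeff_zero]
      simp
    | succ k ih =>
      intro hk
      have h := h2 k (by omega)
      have h0 := ih (by omega)
      rw [mul_add, mul_one, coeff_sub, coeff_add, coeff_derivative, h0] at h
      have h' : (derivative Q * X).coeff k = 0 := by
        cases k with
        | zero => simp
        | succ k => rw [coeff_mul_X, coeff_derivative, h0]; simp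
      rw [h'] at h
      have : (k : ℝ) + 1 ≠ 0 := by positivity
      simpa [this] using h
  exact h3

lemma Lp_comp_Ep (m : ℕ) : (X : ℝ[X]) ^ (m + 1) ∣ (Lp m).comp (Ep (m + 1) - 1) - X := by
  set H := (Lp m).comp (Ep (m + 1) - 1) with hH
  have h1 : derivative H * Ep (m + 1) = (1 - (-(Ep (m + 1) - 1)) ^ m) * Ep m := by
    have := congrArg (fun p => p.comp (Ep (m + 1) - 1)) (Lp_deriv m)
    simp only [mul_comp, add_comp, sub_comp, one_comp, X_comp, pow_comp, neg_comp] at this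
    rw [hH, derivative_comp, derivative_sub, Ep_deriv, derivative_one]
    linear_combination (Ep m) * this
  have h2 : (X : ℝ[X]) ^ m ∣ (derivative H - 1) * Ep (m + 1) := by
    have e : (derivative H - 1) * Ep (m + 1) = - (-(Ep (m + 1) - 1)) ^ m * Ep m
        - C ((m.factorial : ℝ)⁻¹) * X ^ m := by
      have := Ep_succ m
      linear_combination h1 - this
    rw [e]
    refine dvd_sub (Dvd.dvd.mul_right ?_ _) (Dvd.intro_left _ rfl)
    rw [neg_pow]
    exact (Dvd.dvd.mul_left (pow_dvd_pow_of_dvd (X_dvd_Ep m) m) _).neg_right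
  have h3 : (X : ℝ[X]) ^ m ∣ derivative H - 1 := by
    refine IsCoprime.dvd_of_dvd_mul_right ?_ h2
    refine IsCoprime.pow_left ?_
    obtain ⟨q, hq⟩ := X_dvd_Ep m
    exact ⟨-q, 1, by linear_combination hq⟩
  rw [X_pow_dvd_iff] at h3 ⊢
  intro k hk
  cases k with
  | zero =>
    rw [coeff_sub, hH, coeff_zero_eq_eval_zero ((Lp m).comp _), eval_comp, eval_sub,
      ← coeff_zero_eq_eval_zero, Ep_coeff_zero]
    simp [← coeff_zero_eq_eval_zero, Lp_coeff_zero]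
  | succ k =>
    have h := h3 k (by omega)
    have e : derivative H - 1 = derivative (H - X) := by simp
    rw [e, coeff_derivative] at h
    have : (k : ℝ) + 1 ≠ 0 := by positivity
    simpa [this] using h

end polys

section mats
open Polynomial

/-- strictly upper triangular matrices -/
def SU (n : ℕ) : Submodule ℝ (Mat n ℝ) where
  carrier := {A | ∀ i j : Fin n, (j : ℕ) ≤ (i : ℕ) → A i j = 0}
  add_mem' := by intro a b ha hb i j h; simp [ha i j h, hb i j h]
  zero_mem' := by intro i j h; rfl
  smul_mem' := by intro c a ha i j h; simp [ha i j h]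

lemma mem_SU {n : ℕ} {A : Mat n ℝ} :
    A ∈ SU n ↔ ∀ i j : Fin n, (j : ℕ) ≤ (i : ℕ) → A i j = 0 := Iff.rfl

lemma SU_mul {n : ℕ} {A B : Mat n ℝ} (hA : A ∈ SU n) (hB : B ∈ SU n) : A * B ∈ SU n := by
  intro i j h
  rw [Matrix.mul_apply]
  refine Finset.sum_eq_zero fun k _ => ?_
  by_cases hk : (k : ℕ) ≤ i
  · rw [hA i k hk, zero_mul]
  · rw [hB k j (by omega), mul_zero]

lemma SU_pow {n : ℕ} {A : Mat n ℝ} (hA : A ∈ SU n) (k : ℕ) : A ^ (k + 1) ∈ SU n := by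
  induction k with
  | zero => simpa using hA
  | succ k ih => rw [pow_succ]; exact SU_mul ih hA

lemma SU_aeval {n : ℕ} {A : Mat n ℝ} (hA : A ∈ SU n) (p : ℝ[X]) (hp : p.coeff 0 = 0) :
    aeval A p ∈ SU n := by
  rw [aeval_eq_sum_range]
  refine Submodule.sum_mem _ fun k _ => ?_
  cases k with
  | zero => simp [hp]
  | succ k => exact Submodule.smul_mem _ _ (SU_pow hA k)

lemma SU_nil {n : ℕ} {A : Mat n ℝ} (hA : A ∈ SU n) : A ^ n = 0 := by
  have h := Matrix.charpoly_of_upperTriangular A (by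
    intro i j h
    exact hA i j (le_of_lt h))
  have h2 := Matrix.aeval_self_charpoly A
  rw [h, Finset.prod_congr rfl (fun i _ => by rw [hA i i le_rfl, C_0, sub_zero])] at h2
  simpa using h2

lemma UT_iff {n : ℕ} {A : Mat n ℝ} : A ∈ UTset n ↔ A - 1 ∈ SU n := by
  constructor
  · rintro ⟨h1, h2⟩ i j h
    rcases h.eq_or_lt with h | h
    · have : i = j := Fin.ext h.symm
      subst this
      simp [h1]
    · rw [Matrix.sub_apply, h2 i j h, Matrix.one_apply_ne (by rintro rfl; omega), sub_zero]
  · intro h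
    refine ⟨fun i => ?_, fun i j hij => ?_⟩
    · have := h i i le_rfl
      simpa [sub_eq_zero] using this
    · have := h i j hij.le
      rwa [Matrix.sub_apply, Matrix.one_apply_ne (by rintro rfl; omega), sub_zero] at this

def ex {n : ℕ} (A : Mat n ℝ) : Mat n ℝ := aeval A (Ep (n + 2))

def lg {n : ℕ} (A : Mat n ℝ) : Mat n ℝ := aeval (A - 1) (Lp (n + 1))

lemma aeval_of_dvd {n : ℕ} {A : Mat n ℝ} (hA : A ∈ SU n) {p q : ℝ[X]}
    (h : (X : ℝ[X]) ^ (n + 2) ∣ p - q) : aeval A p = aeval A q := by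
  obtain ⟨r, hr⟩ := h
  rw [← sub_eq_zero, ← map_sub, hr, map_mul, map_pow, aeval_X, pow_add, SU_nil hA]
  simp

lemma ex_lg {n : ℕ} {A : Mat n ℝ} (hA : A ∈ UTset n) : ex (lg A) = A := by
  have := aeval_of_dvd (UT_iff.1 hA) (Ep_comp_Lp (n + 1))
  rw [ex, lg, ← aeval_comp, this]
  simp

lemma lg_ex {n : ℕ} {A : Mat n ℝ} (hA : A ∈ SU n) : lg (ex A) = A := by
  have := aeval_of_dvd hA (Lp_comp_Ep (n + 1))
  rw [aeval_comp] at this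
  simpa [ex, lg] using this

lemma lg_mem {n : ℕ} {A : Mat n ℝ} (hA : A ∈ UTset n) : lg A ∈ SU n :=
  SU_aeval (UT_iff.1 hA) _ (Lp_coeff_zero _)

lemma ex_sub_one {n : ℕ} (A : Mat n ℝ) : ex A - 1 = aeval A (Ep (n + 2) - 1) := by
  simp [ex]

lemma ex_mem {n : ℕ} {A : Mat n ℝ} (hA : A ∈ SU n) : ex A ∈ UTset n := by
  rw [UT_iff, ex_sub_one]
  exact SU_aeval hA _ (X_dvd_iff.1 (X_dvd_Ep _))

lemma ex_eq {n : ℕ} {A : Mat n ℝ} (hA : A ∈ SU n) : ex A = IsNilpotent.exp A := by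
  rw [IsNilpotent.exp_eq_sum (k := n + 2) (by rw [pow_add, SU_nil hA, zero_mul]), ex, Ep, map_sum]
  refine Finset.sum_congr rfl fun k _ => ?_
  rw [map_mul, aeval_C, map_pow, aeval_X, ← Algebra.smul_def]
  ext i j
  simp [Rat.smul_def]

lemma ex_add {n : ℕ} {A B : Mat n ℝ} (hA : A ∈ SU n) (hB : B ∈ SU n) (h : Commute A B) :
    ex (A + B) = ex A * ex B := by
  rw [ex_eq hA, ex_eq hB, ex_eq (add_mem hA hB)]
  exact IsNilpotent.exp_add_of_commute h ⟨n, SU_nil hA⟩ ⟨n, SU_nil hB⟩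

lemma ex_zero {n : ℕ} : ex (0 : Mat n ℝ) = 1 := by
  rw [ex_eq (Submodule.zero_mem _), IsNilpotent.exp_zero]

lemma ex_smul_add {n : ℕ} {A : Mat n ℝ} (hA : A ∈ SU n) (s t : ℝ) :
    ex ((s + t) • A) = ex (s • A) * ex (t • A) := by
  rw [add_smul]
  exact ex_add (Submodule.smul_mem _ _ hA) (Submodule.smul_mem _ _ hA)
    (((Commute.refl A).smul_left s).smul_right t)

lemma ex_nat {n : ℕ} {A : Mat n ℝ} (hA : A ∈ SU n) (k : ℕ) :
    ex ((k : ℝ) • A) = ex A ^ k := by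
  induction k with
  | zero => simp [ex_zero]
  | succ k ih => rw [Nat.cast_succ, ex_smul_add hA, ih, one_smul, pow_succ]

lemma aeval_comm {n : ℕ} {A B : Mat n ℝ} (h : Commute A B) (p q : ℝ[X]) :
    Commute (aeval A p) (aeval B q) := by
  rw [aeval_eq_sum_range, aeval_eq_sum_range]
  refine Commute.sum_left _ _ _ fun i _ => Commute.sum_right _ _ _ fun j _ => ?_
  exact ((h.pow_pow i j).smul_left _).smul_right _

lemma lg_comm {n : ℕ} {A B : Mat n ℝ} (h : Commute A B) : Commute (lg A) (lg B) :=
  aeval_comm ((h.sub_left (Commute.one_left _)).sub_right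
    ((Commute.one_right _).sub_left (Commute.one_right _))) _ _

lemma lg_mul {n : ℕ} {A B : Mat n ℝ} (hA : A ∈ UTset n) (hB : B ∈ UTset n) (h : Commute A B) :
    lg (A * B) = lg A + lg B := by
  conv_lhs => rw [← ex_lg hA, ← ex_lg hB, ← ex_add (lg_mem hA) (lg_mem hB) (lg_comm h)]
  exact lg_ex (add_mem (lg_mem hA) (lg_mem hB))

lemma cont_aeval {n : ℕ} (p : ℝ[X]) : Continuous fun A : Mat n ℝ => aeval A p := by
  simp only [aeval_eq_sum_range]
  fun_prop

lemma cont_ex {n : ℕ} : Continuous (ex : Mat n ℝ → Mat n ℝ) := cont_aeval _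

lemma cont_lg {n : ℕ} : Continuous (lg : Mat n ℝ → Mat n ℝ) := 
  (cont_aeval _).comp (continuous_id.sub continuous_const)

lemma aeval_slope {n : ℕ} (p : ℝ[X]) (h0 : p.coeff 0 = 0) :
    ∃ M : ℝ → Mat n ℝ → Mat n ℝ, (Continuous fun x : ℝ × Mat n ℝ => M x.1 x.2) ∧
      (∀ t Z, aeval (t • Z) p = t • M t Z) ∧ ∀ Z, M 0 Z = p.coeff 1 • Z := by
  refine ⟨fun t Z => ∑ k ∈ Finset.range (p.natDegree + 1), 
    (p.coeff (k + 1) * t ^ k) • Z ^ (k + 1), by fun_prop, fun t Z => ?_, fun Z => ?_⟩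
  · rw [aeval_eq_sum_range' (n := p.natDegree + 1 + 1) (by omega), Finset.sum_range_succ', h0,
      zero_smul, add_zero, Finset.smul_sum]
    refine Finset.sum_congr rfl fun k _ => ?_
    rw [_root_.smul_pow, smul_smul, smul_smul, pow_succ t]
    congr 1; ring
  · beta_reduce
    rw [Finset.sum_range_succ', Finset.sum_eq_zero]
    · simp
    · intro k _; simp

lemma trotter {n : ℕ} (A B : Mat n ℝ) : ∃ M : ℝ → Mat n ℝ, Continuous M ∧ M 0 = A + B ∧
    ∀ t, lg (ex (t • A) * ex (t • B)) = t • M t := by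
  obtain ⟨U, hU, hU1, hU0⟩ := aeval_slope (n := n) (Ep (n + 2) - 1) (X_dvd_iff.1 (X_dvd_Ep _))
  obtain ⟨V, hV, hV1, hV0⟩ := aeval_slope (n := n) (Lp (n + 1)) (Lp_coeff_zero _)
  have cA : Continuous fun t => U t A := hU.comp (continuous_id.prodMk continuous_const)
  have cB : Continuous fun t => U t B := hU.comp (continuous_id.prodMk continuous_const)
  have cZ : Continuous fun t : ℝ => U t A + U t B + t • (U t A * U t B) := by fun_prop
  refine ⟨fun t => V t (U t A + U t B + t • (U t A * U t B)), 
    hV.comp (continuous_id.prodMk cZ), ?_, fun t => ?_⟩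
  · simp [hV0, hU0, Lp_coeff_one, Ep_coeff_one, coeff_one]
  · rw [← hV1, lg]
    congr 1
    have a : ex (t • A) = 1 + t • U t A := by rw [← hU1, ← ex_sub_one]; abel
    have b : ex (t • B) = 1 + t • U t B := by rw [← hU1, ← ex_sub_one]; abel
    rw [a, b]
    simp only [mul_add, add_mul, one_mul, mul_one, smul_add, smul_mul_assoc, mul_smul_comm]
    abel_nf

lemma one_param {n : ℕ} {G : Set (Mat n ℝ)} (hG : IsRealUnipotentGroup n G) {A : Mat n ℝ}
    (hA : A ∈ SU n) (h : ex A ∈ G) (t : ℝ) : ex (t • A) ∈ G := by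
  obtain ⟨⟨S, hS⟩, h1, hm, -⟩ := hG
  have hk : ∀ k : ℕ, ex ((k : ℝ) • A) ∈ G := by
    intro k
    rw [ex_nat hA]
    induction k with
    | zero => simpa using h1
    | succ k ih => rw [pow_succ]; exact hm _ ih _ h
  rw [hS]
  refine ⟨ex_mem (Submodule.smul_mem _ _ hA), fun p hp => ?_⟩
  let E : Fin n × Fin n → ℝ[X] := fun ij =>
    ∑ k ∈ Finset.range ((Ep (n + 2)).natDegree + 1), C ((Ep (n + 2)).coeff k * (A ^ k) ij.1 ij.2) * X ^ k
  have hE : ∀ s ij, (E ij).eval s = matEval (ex (s • A)) ij := by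
    intro s ij
    simp only [E, matEval, ex, aeval_eq_sum_range, eval_finset_sum, Matrix.sum_apply]
    refine Finset.sum_congr rfl fun k _ => ?_
    simp [_root_.smul_pow]
    ring
  let q : ℝ[X] := MvPolynomial.aeval E p
  have hq : ∀ s, q.eval s = MvPolynomial.eval (matEval (ex (s • A))) p := by
    intro s
    have h1 : matEval (ex (s • A)) = fun ij => (E ij).eval s := by ext ij; rw [hE]
    rw [h1]
    simp only [q]
    rw [← coe_evalRingHom, MvPolynomial.map_aeval]
    simp only [coe_evalRingHom]
    rw [MvPolynomial.eval_eq', MvPolynomial.coe_eval₂Hom, MvPolynomial.eval₂_eq']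
    simp
  have hq0 : q = 0 := by
    refine eq_zero_of_infinite_isRoot q ?_
    refine Set.Infinite.mono (s := Set.range (fun k : ℕ => (k : ℝ))) ?_
      (Set.infinite_range_of_injective Nat.cast_injective)
    rintro _ ⟨k, rfl⟩
    have := hk k
    rw [hS] at this
    change q.eval _ = 0
    rw [hq]
    exact this.2 p hp
  rw [← hq, hq0, eval_zero]

/-- maps with polynomial entries -/
def PolyM {n m : ℕ} (F : Mat n ℝ → Mat m ℝ) : Prop :=
  ∀ i j, ∃ P : MvPolynomial (Fin n × Fin n) ℝ, ∀ A, F A i j = MvPolynomial.eval (matEval A) P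

lemma PolyM.const {n m : ℕ} (B : Mat m ℝ) : PolyM (fun _ : Mat n ℝ => B) :=
  fun i j => ⟨MvPolynomial.C (B i j), fun A => by simp⟩

lemma PolyM.id {n : ℕ} : PolyM (fun A : Mat n ℝ => A) :=
  fun i j => ⟨MvPolynomial.X (i, j), fun A => by simp [matEval]⟩

lemma PolyM.add {n m : ℕ} {F H : Mat n ℝ → Mat m ℝ} (hF : PolyM F) (hH : PolyM H) :
    PolyM (fun A => F A + H A) := by
  intro i j
  obtain ⟨P, hP⟩ := hF i j
  obtain ⟨Q, hQ⟩ := hH i j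
  exact ⟨P + Q, fun A => by simp [hP, hQ]⟩

lemma PolyM.mul {n m : ℕ} {F H : Mat n ℝ → Mat m ℝ} (hF : PolyM F) (hH : PolyM H) :
    PolyM (fun A => F A * H A) := by
  intro i j
  choose P hP using hF
  choose Q hQ using hH
  exact ⟨∑ k, P i k * Q k j, fun A => by simp [Matrix.mul_apply, hP, hQ]⟩

lemma PolyM.aeval {n m : ℕ} {F : Mat n ℝ → Mat m ℝ} (hF : PolyM F) (p : ℝ[X]) :
    PolyM (fun A => Polynomial.aeval (F A) p) := by
  induction p using Polynomial.induction_on' with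
  | add p q hp hq => simpa using hp.add hq
  | monomial k a =>
    simp only [aeval_monomial]
    refine (PolyM.const _).mul ?_
    induction k with
    | zero => simpa using PolyM.const 1
    | succ k ih => simpa only [pow_succ] using ih.mul hF

lemma PolyM.linear {n m l : ℕ} {F : Mat n ℝ → Mat m ℝ} (hF : PolyM F)
    (L : Mat m ℝ →ₗ[ℝ] Mat l ℝ) : PolyM (fun A => L (F A)) := by
  intro i j
  choose P hP using hF
  refine ⟨∑ a, ∑ b, P a b * MvPolynomial.C (L (Matrix.single a b 1) i j), fun A => ?_⟩
  change L (F A) i j = _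
  conv_lhs => rw [Matrix.matrix_eq_sum_single (F A)]
  simp only [map_sum, Matrix.sum_apply, map_mul, MvPolynomial.eval_C]
  refine Finset.sum_congr rfl fun a _ => Finset.sum_congr rfl fun b _ => ?_
  rw [← hP, ← mul_one (F A a b), ← smul_eq_mul, ← Matrix.smul_single, map_smul]
  simp

lemma closed_G {n : ℕ} {G : Set (Mat n ℝ)} (hG : IsRealUnipotentGroup n G) : IsClosed G := by
  obtain ⟨⟨S, hS⟩, -⟩ := hG
  have e : G = UTset n ∩ ⋂ p ∈ S, {A | MvPolynomial.eval (matEval A) p = 0} := by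
    rw [hS]; ext A; simp
  rw [e]
  have hc : ∀ i j, Continuous fun A : Mat n ℝ => A i j := fun i j => by fun_prop
  refine IsClosed.inter ?_ (isClosed_biInter fun p _ => ?_)
  · simp only [UTset, Set.setOf_and, Set.setOf_forall]
    refine IsClosed.inter (isClosed_iInter fun i => isClosed_eq (hc i i) continuous_const) ?_
    exact isClosed_iInter fun i => isClosed_iInter fun j => isClosed_iInter fun _ =>
      isClosed_eq (hc i j) continuous_const
  · refine isClosed_eq ?_ continuous_const
    exact (MvPolynomial.continuous_eval p).comp (continuous_pi fun ij => hc ij.1 ij.2)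

lemma closed_SU {n : ℕ} : IsClosed (SU n : Set (Mat n ℝ)) := by
  have hc : ∀ i j, Continuous fun A : Mat n ℝ => A i j := fun i j => by fun_prop
  have : (SU n : Set (Mat n ℝ)) = {A | ∀ i j : Fin n, (j : ℕ) ≤ (i : ℕ) → A i j = 0} := rfl
  rw [this]
  simp only [Set.setOf_forall]
  exact isClosed_iInter fun i => isClosed_iInter fun j => isClosed_iInter fun _ =>
      isClosed_eq (hc i j) continuous_const

end mats

/-- a continuous homomorphism between real unipotent groups is polynomial. -/
theorem stmt12 {n₁ n₂ : ℕ} (G₁ : Set (Mat n₁ ℝ)) (G₂ : Set (Mat n₂ ℝ))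
    (hG₁ : IsRealUnipotentGroup n₁ G₁) (hG₂ : IsRealUnipotentGroup n₂ G₂)
    (f : Mat n₁ ℝ → Mat n₂ ℝ) (hmaps : ∀ g ∈ G₁, f g ∈ G₂)
    (hhom : ∀ a ∈ G₁, ∀ b ∈ G₁, f (a * b) = f a * f b)
    (hcont : ContinuousOn f G₁) :
    ∃ P : Fin n₂ → Fin n₂ → MvPolynomial (Fin n₁ × Fin n₁) ℝ,
      ∀ g ∈ G₁, ∀ i j, f g i j = MvPolynomial.eval (matEval g) (P i j) := by
  have hUT₁ : ∀ g ∈ G₁, g ∈ UTset n₁ := by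
    intro g hg
    obtain ⟨⟨S, hS⟩, -⟩ := hG₁
    rw [hS] at hg
    exact hg.1
  have hUT₂ : ∀ g ∈ G₂, g ∈ UTset n₂ := by
    intro g hg
    obtain ⟨⟨S, hS⟩, -⟩ := hG₂
    rw [hS] at hg
    exact hg.1
  have hmul := hG₁.2.2.1
  -- the Lie algebra, as a set
  let 𝔤 : Set (Mat n₁ ℝ) := {A | A ∈ SU n₁ ∧ ex A ∈ G₁}
  have hclosed : IsClosed 𝔤 := closed_SU.inter ((closed_G hG₁).preimage cont_ex)
  have hsmul : ∀ (t : ℝ) (A), A ∈ 𝔤 → t • A ∈ 𝔤 := fun t A hA =>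
    ⟨Submodule.smul_mem _ _ hA.1, one_param hG₁ hA.1 hA.2 t⟩
  have hlg : ∀ g ∈ G₁, lg g ∈ 𝔤 := fun g hg =>
    ⟨lg_mem (hUT₁ g hg), by rw [ex_lg (hUT₁ g hg)]; exact hg⟩
  have hM : ∀ A ∈ 𝔤, ∀ B ∈ 𝔤, ∀ M : ℝ → Mat n₁ ℝ, Continuous M →
      (∀ t, lg (ex (t • A) * ex (t • B)) = t • M t) → ∀ t, M t ∈ 𝔤 := by
    intro A hA B hB M hMc hM t
    have h1 : ({0}ᶜ : Set ℝ) ⊆ M ⁻¹' 𝔤 := by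
      intro s hs
      have h2 : M s = s⁻¹ • lg (ex (s • A) * ex (s • B)) := by
        rw [hM, smul_smul, inv_mul_cancel₀ hs, one_smul]
      change M s ∈ 𝔤
      rw [h2]
      exact hsmul _ _ (hlg _ (hmul _ (hsmul s A hA).2 _ (hsmul s B hB).2))
    have h2 := closure_minimal h1 (hclosed.preimage hMc)
    rw [(dense_compl_singleton (0 : ℝ)).closure_eq] at h2
    exact h2 (Set.mem_univ t)
  have hadd : ∀ A ∈ 𝔤, ∀ B ∈ 𝔤, A + B ∈ 𝔤 := by
    intro A hA B hB
    obtain ⟨M, hMc, hM0, hM1⟩ := trotter A B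
    rw [← hM0]
    exact hM A hA B hB M hMc hM1 0
  let φ : Mat n₁ ℝ → Mat n₂ ℝ := fun A => lg (f (ex A))
  have hfU : ∀ A ∈ 𝔤, f (ex A) ∈ UTset n₂ := fun A hA => hUT₂ _ (hmaps _ hA.2)
  have hφex : ∀ A ∈ 𝔤, ex (φ A) = f (ex A) := fun A hA => ex_lg (hfU A hA)
  have hφc : ContinuousOn φ 𝔤 :=
    cont_lg.comp_continuousOn (hcont.comp cont_ex.continuousOn fun A hA => hA.2)
  have hφsmul : ∀ (t : ℝ), ∀ A ∈ 𝔤, φ (t • A) = t • φ A := by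
    intro t A hA
    have hadd' : ∀ s t : ℝ, φ ((s + t) • A) = φ (s • A) + φ (t • A) := by
      intro s t
      have hs := hsmul s A hA
      have ht := hsmul t A hA
      have e1 : f (ex ((s + t) • A)) = f (ex (s • A)) * f (ex (t • A)) := by
        rw [ex_smul_add hA.1, hhom _ hs.2 _ ht.2]
      have e2 : f (ex ((s + t) • A)) = f (ex (t • A)) * f (ex (s • A)) := by
        rw [add_comm, ex_smul_add hA.1, hhom _ ht.2 _ hs.2]
      change lg (f (ex ((s + t) • A))) = _
      rw [e1]
      exact lg_mul (hfU _ hs) (hfU _ ht) (e1.symm.trans e2)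
    let ψ : ℝ →+ Mat n₂ ℝ := AddMonoidHom.mk' (fun s => φ (s • A)) hadd'
    have hψ : Continuous ψ := 
      hφc.comp_continuous (continuous_id.smul continuous_const) fun s => hsmul s A hA
    have := map_real_smul ψ hψ t 1
    simpa [ψ] using this
  have hφadd : ∀ A ∈ 𝔤, ∀ B ∈ 𝔤, φ (A + B) = φ A + φ B := by
    intro A hA B hB
    obtain ⟨M, hMc, hM0, hM1⟩ := trotter A B
    obtain ⟨K, hKc, hK0, hK1⟩ := trotter (φ A) (φ B)
    have hMg := hM A hA B hB M hMc hM1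
    have c1 : Continuous fun t => φ (M t) := hφc.comp_continuous hMc hMg
    have key : (fun t => φ (M t)) = K := by
      refine Continuous.ext_on (dense_compl_singleton (0 : ℝ)) c1 hKc ?_
      intro t ht
      have hs := hsmul t A hA
      have hs' := hsmul t B hB
      have e : t • φ (M t) = t • K t := by
        rw [← hφsmul t _ (hMg t), ← hM1, ← hK1, ← hφsmul t A hA, ← hφsmul t B hB,
          hφex _ hs, hφex _ hs']
        change lg (f (ex (lg _))) = _
        rw [ex_lg (hUT₁ _ (hmul _ hs.2 _ hs'.2)), hhom _ hs.2 _ hs'.2]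
      exact smul_right_injective _ (show t ≠ 0 from ht) e
    have := congrFun key 0
    simp only [hM0, hK0] at this
    exact this
  let V : Submodule ℝ (Mat n₁ ℝ) :=
    { carrier := 𝔤
      add_mem' := fun {a b} ha hb => hadd a ha b hb
      zero_mem' := ⟨Submodule.zero_mem _, by rw [ex_zero]; exact hG₁.2.1⟩
      smul_mem' := fun c x hx => hsmul c x hx }
  let φl : V →ₗ[ℝ] Mat n₂ ℝ :=
    { toFun := fun x => φ x
      map_add' := fun x y => hφadd x x.2 y y.2
      map_smul' := fun c x => hφsmul c x x.2 }
  obtain ⟨Φ, hΦ⟩ := LinearMap.exists_extend φl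
  have hpoly : PolyM (fun A : Mat n₁ ℝ => ex (Φ (lg A))) := by
    have h1 : PolyM (fun A : Mat n₁ ℝ => A + (-1)) := PolyM.id.add (PolyM.const _)
    simp only [← sub_eq_add_neg] at h1
    exact ((h1.aeval (Lp (n₁ + 1))).linear Φ).aeval (Ep (n₂ + 2))
  choose P hP using hpoly
  refine ⟨P, fun g hg i j => ?_⟩
  rw [← hP]
  have h1 : Φ (lg g) = φ (lg g) := LinearMap.congr_fun hΦ ⟨lg g, hlg g hg⟩
  change f g i j = ex (Φ (lg g)) i j
  rw [h1, hφex _ (hlg g hg), ex_lg (hUT₁ g hg)]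
end
end
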